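/- For every T ∈ (0,1), if the partition function Z(T) = ∑_{p ∈ dom U} 2^{-|p|/T} is computable, then T is weakly Chaitin T-random and T-compressible, and hence lim_{n→∞} H(T_n)/n = T. -/

import Mathlib

open Filter

/-- A real number `α` is computable if some total recursive `f : ℕ+ → ℚ`
satisfies `|α - f n| < 1/n` for all `n`. -/
def ComputableReal (α : ℝ) : Prop :=
  ∃ f : ℕ+ → ℚ, Computable f ∧ ∀ n : ℕ+, |α - (f n : ℝ)| < 1 / (n : ℝ)

/-- A partial function on binary strings has prefix-free domain. -/
def PrefixFree (C : List Bool →. List Bool) : Prop :=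
  ∀ p q : List Bool, (C p).Dom → (C q).Dom → p <+: q → p = q

/-- `U` is an optimal prefix-free machine (universal self-delimiting Turing machine). -/
def OptimalMachine (U : List Bool →. List Bool) : Prop :=
  Partrec U ∧ PrefixFree U ∧
    ∀ C : List Bool →. List Bool, Partrec C → PrefixFree C →
      ∃ d : ℕ, ∀ p s, s ∈ C p → ∃ p', s ∈ U p' ∧ p'.length ≤ p.length + d

/-- Program-size (prefix-free Kolmogorov) complexity of `s` with respect to `U`. -/
noncomputable def complexity (U : List Bool →. List Bool) (s : List Bool) : ℕ :=
  sInf {n | ∃ p : List Bool, p.length = n ∧ s ∈ U p}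

/-- The `i`-th bit (0-indexed) of the base-two expansion of the fractional part
of `α`, in the expansion with infinitely many zeros. -/
noncomputable def bitOf (α : ℝ) (i : ℕ) : Bool := decide (⌊Int.fract α * 2 ^ (i + 1)⌋ % 2 = 1)

/-- The first `n` bits of the base-two expansion of `α - ⌊α⌋`
(with infinitely many zeros). -/
noncomputable def firstBits (α : ℝ) (n : ℕ) : List Bool := (List.range n).map (bitOf α)

/-- `α` is weakly Chaitin `T`-random: `∃ c, ∀ n, T·n − c ≤ H(α_n)`. -/
def WeaklyChaitinTRandom (U : List Bool →. List Bool) (T α : ℝ) : Prop :=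
  ∃ c : ℕ, ∀ n : ℕ+, T * (n : ℝ) - (c : ℝ) ≤ (complexity U (firstBits α n) : ℝ)

/-- `α` is `T`-compressible: `limsup H(α_n)/n ≤ T`. -/
def TCompressible (U : List Bool →. List Bool) (T α : ℝ) : Prop :=
  Filter.limsup (fun n : ℕ => (complexity U (firstBits α n) : ℝ) / (n : ℝ)) atTop ≤ T

/-- The partition function `Z(T) = ∑_{p ∈ dom U} 2^{-|p|/T}`. -/
noncomputable def Zfun (U : List Bool →. List Bool) (T : ℝ) : ℝ :=
  ∑' p : {p : List Bool // (U p).Dom}, (2 : ℝ) ^ (-((p : List Bool).length : ℝ) / T)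

/-- The free energy `F(T) = -T log₂ Z(T)`. -/
noncomputable def Ffun (U : List Bool →. List Bool) (T : ℝ) : ℝ :=
  -T * Real.logb 2 (Zfun U T)

open Encodable

theorem enc_rat (q : ℚ) : @encode ℚ Rat.instEncodable q = Nat.pair (encode q.num) q.den := by
  rcases q with ⟨a, b, c, d⟩
  rfl

theorem enc_int_nonneg (n : ℕ) : encode (n : ℤ) = 2 * n := by
  rfl
theorem enc_int_neg (n : ℕ) : encode (Int.negSucc n) = 2 * n + 1 := by
  rfl

theorem enc_natAbs (z : ℤ) : (encode z + 1) / 2 = z.natAbs := by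
  rcases z with n | n
  · change (2 * n + 1)/2 = n
    omega
  · change (2 * n + 1 + 1)/2 = n+1
    omega

def ratS (x : ℕ) : Prop := 0 < x.unpair.2 ∧ ∀ k < x.unpair.2 + 1, (((x.unpair.1 + 1)/2) % k = 0 ∧ x.unpair.2 % k = 0 → k = 1)

theorem ratS_iff (x : ℕ) : ratS x ↔ ∃ q : ℚ, @encode ℚ Rat.instEncodable q = x := by
  constructor
  · rintro ⟨h1, h2⟩
    obtain ⟨z, hz⟩ : ∃ z : ℤ, encode z = x.unpair.1 := ⟨Denumerable.ofNat ℤ x.unpair.1, Denumerable.encode_ofNat _⟩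
    rw [← hz, enc_natAbs] at h2
    refine ⟨⟨z, x.unpair.2, h1.ne', ?_⟩, ?_⟩
    · rw [Nat.coprime_iff_gcd_eq_one] 
      apply h2
      · have := Nat.gcd_le_right z.natAbs h1
        omega
      · exact ⟨Nat.mod_eq_zero_of_dvd (Nat.gcd_dvd_left _ _), Nat.mod_eq_zero_of_dvd (Nat.gcd_dvd_right _ _)⟩
    · rw [enc_rat]
      simp [hz]
  · rintro ⟨q, rfl⟩
    rw [enc_rat]
    unfold ratS
    simp only [Nat.unpair_pair, enc_natAbs]
    refine ⟨q.den_pos, fun k _ h => ?_⟩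
    exact Nat.eq_one_of_dvd_coprimes q.reduced (Nat.dvd_of_mod_eq_zero h.1) (Nat.dvd_of_mod_eq_zero h.2)

theorem ratS_prim : PrimrecPred ratS := by
  have hR : PrimrecRel (fun (k x : ℕ) => ¬ (((x.unpair.1 + 1)/2) % k = 0 ∧ x.unpair.2 % k = 0) ∨ k = 1) := by
    have h1 : Primrec₂ (fun (k x : ℕ) => (((x.unpair.1 + 1)/2) % k)) :=
      Primrec.nat_mod.comp (Primrec.nat_div.comp (Primrec.succ.comp (Primrec.fst.comp (Primrec.unpair.comp Primrec.snd))) (Primrec.const 2)) Primrec.fst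
    have h2 : Primrec₂ (fun (k x : ℕ) => (x.unpair.2 % k)) :=
      Primrec.nat_mod.comp (Primrec.snd.comp (Primrec.unpair.comp Primrec.snd)) Primrec.fst
    exact (((Primrec.eq.comp h1 (Primrec.const 0)).and (Primrec.eq.comp h2 (Primrec.const 0))).not).or (Primrec.eq.comp Primrec.fst (Primrec.const 1))
  have h3 := hR.forall_lt
  have hx : Primrec (fun x : ℕ => x.unpair.2) := Primrec.snd.comp Primrec.unpair
  have h4 : PrimrecPred (fun x : ℕ => ∀ k < x.unpair.2 + 1, ¬ (((x.unpair.1 + 1)/2) % k = 0 ∧ x.unpair.2 % k = 0) ∨ k = 1) :=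
    h3.comp (Primrec.succ.comp hx) Primrec.id
  refine ((Primrec.nat_lt.comp (Primrec.const 0) hx).and h4).of_eq ?_
  intro x
  unfold ratS
  simp only [imp_iff_not_or]

/-- Code of a rational in the denumerable numbering. -/
def ratCode (q : ℚ) : ℕ := @encode ℚ (Rat.instDenumerable).toEncodable q

theorem ratCode_ofNat (n : ℕ) : ratCode (@Denumerable.ofNat ℚ Rat.instDenumerable n) = n :=
  @Denumerable.encode_ofNat ℚ Rat.instDenumerable n

theorem computable_ratCode : Computable ratCode := Computable.encode

/-- The denumerable numbering of rationals enumerates `ratS` in order. -/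
theorem ratenum : ∃ h : ℕ → ℕ, StrictMono h ∧ ∀ q : ℚ, h (ratCode q) = @encode ℚ Rat.instEncodable q := by
  letI := @decidableRangeEncode ℚ Rat.instEncodable
  have : Infinite (Set.range (@encode ℚ Rat.instEncodable)) :=
    Infinite.of_injective _ (Equiv.ofInjective _ encode_injective).injective
  refine ⟨fun n => (Nat.Subtype.ofNat (Set.range (@encode ℚ Rat.instEncodable)) n : ℕ), ?_, ?_⟩
  · apply strictMono_nat_of_lt_succ
    intro n
    exact Nat.Subtype.lt_succ_self _
  · intro q
    have h : @Denumerable.ofNat ℚ Rat.instDenumerable (ratCode q) = q :=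
      @Denumerable.ofNat_encode ℚ Rat.instDenumerable q
    generalize ratCode q = n at h
    rw [← h]
    have : (equivRangeEncode ℚ) (@Denumerable.ofNat ℚ Rat.instDenumerable n) = Nat.Subtype.ofNat (Set.range (@encode ℚ Rat.instEncodable)) n := by
      rw [← Equiv.eq_symm_apply]
      rfl
    beta_reduce
    rw [← this]
    rfl

theorem rat_computable : ∃ h : ℕ → ℕ, Computable h ∧ ∀ q : ℚ, h (ratCode q) = Nat.pair (encode q.num) q.den := by
  obtain ⟨h, hm, hq⟩ := ratenum
  refine ⟨h, ?_, fun q => by rw [hq, enc_rat]⟩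
  have hS : ∀ n, ratS (h n) := by
    intro n
    rw [ratS_iff]
    refine ⟨@Denumerable.ofNat ℚ Rat.instDenumerable n, ?_⟩
    rw [← hq, ratCode_ofNat]
  have hS' : ∀ x, ratS x → ∃ n, h n = x := by
    intro x hx
    rw [ratS_iff] at hx
    obtain ⟨q, rfl⟩ := hx
    exact ⟨_, hq q⟩
  have : DecidablePred ratS := Classical.decPred _
  -- h n is the least element of S not below h k, k < n
  have hcount : ∀ n, (List.filter (fun y => decide (ratS y)) (List.range (h n))).length = n := by
    intro n
    have : (List.filter (fun y => decide (ratS y)) (List.range (h n))).toFinset = (Finset.range n).image h := by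
      ext y
      simp only [List.mem_toFinset, List.mem_filter, List.mem_range, decide_eq_true_eq, Finset.mem_image, Finset.mem_range]
      constructor
      · rintro ⟨h1, h2⟩
        obtain ⟨k, rfl⟩ := hS' y h2
        exact ⟨k, hm.lt_iff_lt.1 h1, rfl⟩
      · rintro ⟨k, hk, rfl⟩
        exact ⟨hm hk, hS k⟩
    rw [← List.toFinset_card_of_nodup (List.Nodup.filter _ List.nodup_range), this, Finset.card_image_of_injective _ hm.injective, Finset.card_range]
  have hpr : PrimrecRel (fun n x => ratS x ∧ (List.filter (fun y => decide (ratS y)) (List.range x)).length = n) := by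
    apply (ratS_prim.comp Primrec.snd).and
    apply Primrec.eq.comp _ Primrec.fst
    exact Primrec.list_length.comp ((Primrec.listFilter ratS_prim).comp (Primrec.list_range.comp Primrec.snd))
  have hex : ∀ n, ∃ x, ratS x ∧ (List.filter (fun y => decide (ratS y)) (List.range x)).length = n := fun n => ⟨h n, hS n, hcount n⟩
  have hpr2 : Computable₂ (fun n x => decide (ratS x ∧ (List.filter (fun y => decide (ratS y)) (List.range x)).length = n)) := by
    exact hpr.decide.to_comp
  have := Partrec.rfind (p := fun n x => (Part.some (decide (ratS x ∧ (List.filter (fun y => decide (ratS y)) (List.range x)).length = n)))) hpr2.partrec₂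
  refine Partrec.of_eq_tot this ?_
  intro n
  refine Nat.mem_rfind.2 ⟨?_, ?_⟩
  · simp [hS n, hcount n]
  · intro m hm'
    simp only [Part.mem_some_iff, Bool.false_eq, decide_eq_false_iff_not]
    rintro ⟨h1, h2⟩
    obtain ⟨k, rfl⟩ := hS' m h1
    rw [hcount k] at h2
    subst h2
    exact lt_irrefl _ hm'

theorem primrec_pow : Primrec₂ (fun a b : ℕ => a ^ b) := by
  have : Primrec₂ (fun (a n : ℕ) => Nat.rec (motive := fun _ => ℕ) 1 (fun _ y => y * a) n) :=
    Primrec.nat_rec (f := fun _ : ℕ => 1) (g := fun a (p : ℕ × ℕ) => p.2 * a) (Primrec.const 1)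
      (Primrec.nat_mul.comp (Primrec.snd.comp Primrec.snd) Primrec.fst)
  refine this.of_eq ?_
  intro a n
  induction n with
  | zero => rfl
  | succ n ih => simp only [pow_succ]; rw [← ih]

theorem pnat_enc (n : ℕ) : encode (Nat.succPNat n) = n := rfl

theorem computable_succPNat : Computable Nat.succPNat := by
  have h : Primrec Nat.succPNat := by
    rw [← Primrec.encode_iff]
    exact Primrec.id.of_eq fun n => rfl
  exact h.to_comp

theorem computable_dyadic {z : ℝ} (hz : ComputableReal z) (hz0 : 0 ≤ z) :
    ∃ g : ℕ → ℕ, Computable g ∧ ∀ n, |z * 2 ^ n - g n| ≤ 2 := by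
  obtain ⟨f, hf, hfz⟩ := hz
  obtain ⟨h, hc, hq⟩ := rat_computable
  let F : ℕ → ℕ → ℕ := fun x n => if x.unpair.1 % 2 = 0 then (x.unpair.1 / 2 * 2 ^ n) / x.unpair.2 else 0
  have hF : Primrec₂ F := by
    have h1 : Primrec₂ (fun x _n : ℕ => x.unpair.1) := Primrec.fst.comp (Primrec.unpair.comp Primrec.fst)
    have h2 : Primrec₂ (fun x _n : ℕ => x.unpair.2) := Primrec.snd.comp (Primrec.unpair.comp Primrec.fst)
    refine Primrec.ite (Primrec.eq.comp (Primrec.nat_mod.comp h1 (Primrec.const 2)) (Primrec.const 0)) ?_ (Primrec.const 0)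
    exact Primrec.nat_div.comp (Primrec.nat_mul.comp (Primrec.nat_div.comp h1 (Primrec.const 2)) (primrec_pow.comp (Primrec.const 2) Primrec.snd)) h2
  refine ⟨fun n => F (h (ratCode (f (Nat.succPNat (2 ^ n - 1))))) n, ?_, ?_⟩
  · refine hF.to_comp.comp (hc.comp (computable_ratCode.comp (hf.comp (computable_succPNat.comp ?_)))) Computable.id
    exact (Primrec.nat_sub.comp (primrec_pow.comp (Primrec.const 2) Primrec.id) (Primrec.const 1)).to_comp
  · intro n
    have h1 := hfz (Nat.succPNat (2 ^ n - 1))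
    set q := f (Nat.succPNat (2 ^ n - 1)) with hqdef
    have hpos : 0 < 2 ^ n := by positivity
    have h2 : ((Nat.succPNat (2 ^ n - 1) : ℕ+) : ℝ) = 2 ^ n := by
      have : ((Nat.succPNat (2 ^ n - 1) : ℕ+) : ℕ) = 2 ^ n := by
        rw [Nat.succPNat_coe]; omega
      exact_mod_cast congrArg (Nat.cast : ℕ → ℝ) this
    rw [h2] at h1
    have hp : (0:ℝ) < 2 ^ n := by positivity
    have h3 : |z * 2 ^ n - q * 2 ^ n| < 1 := by
      rw [← sub_mul, abs_mul, abs_of_pos hp]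
      rwa [lt_div_iff₀ hp] at h1
    have key : |((q:ℝ) * 2 ^ n) - (F (h (ratCode q)) n : ℝ)| ≤ 1 ∨ (F (h (ratCode q)) n = 0 ∧ (q : ℝ) ≤ 0) := by
      rw [hq]
      simp only [F, Nat.unpair_pair]
      rcases hnum : q.num with a | a
      · left
        have ha : encode (Int.ofNat a) = 2 * a := rfl
        rw [ha]
        simp only [Nat.mul_mod_right, if_true]
        rw [Nat.mul_div_cancel_left _ (by norm_num : 0 < 2)]
        have hqv : (q : ℝ) * 2 ^ n = ((a * 2 ^ n : ℕ) : ℝ) / (q.den : ℝ) := by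
          rw [Rat.cast_def, hnum]
          push_cast
          simp
          ring
        rw [hqv]
        have h5 : ((a * 2 ^ n : ℕ) : ℝ) / (q.den : ℝ) < ((a * 2 ^ n / q.den : ℕ) : ℝ) + 1 := by
          have := Nat.lt_div_mul_add (a := a * 2 ^ n) (b := q.den) q.den_pos
          rw [div_lt_iff₀ (by exact_mod_cast q.den_pos)]
          have h6 : a * 2 ^ n < (a * 2 ^ n / q.den + 1) * q.den := by
            rw [add_mul, one_mul]; exact this
          exact_mod_cast h6
        have h4 := Nat.cast_div_le (α := ℝ) (m := a * 2 ^ n) (n := q.den)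
        rw [abs_le]; constructor <;> linarith
      · right
        have ha : encode (Int.negSucc a) = 2 * a + 1 := rfl
        rw [ha]
        refine ⟨by rw [if_neg (by omega)], ?_⟩
        have : q ≤ 0 := by
          rw [← Rat.num_nonpos, hnum]
          exact (Int.negSucc_lt_zero a).le
        exact_mod_cast this
    rw [abs_lt] at h3
    rcases key with h4 | ⟨h4, h5⟩
    · rw [abs_le] at h4 ⊢
      constructor <;> linarith [h4.1, h4.2]
    · change |z * 2 ^ n - (F (h (ratCode q)) n : ℝ)| ≤ 2
      rw [h4]
      have : (q:ℝ) * 2 ^ n ≤ 0 := mul_nonpos_of_nonpos_of_nonneg h5 hp.le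
      have : 0 ≤ z * 2 ^ n := by positivity
      rw [abs_le]
      push_cast
      constructor <;> linarith

theorem kraft_prefix (S : Finset (List Bool)) (hS : ∀ p ∈ S, ∀ q ∈ S, p <+: q → p = q) :
    ∑ p ∈ S, (1 / 2 : ℝ) ^ p.length ≤ 1 := by
  by_cases h0 : [] ∈ S
  · have : S = {[]} := by
      ext q
      simp only [Finset.mem_singleton]
      exact ⟨fun h => (hS _ h0 _ h (List.nil_prefix)).symm, fun h => h ▸ h0⟩
    rw [this]; simp
  · have hd : InformationTheory.UniquelyDecodable (S : Set (List Bool)) := by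
      intro L₁
      induction L₁ with
      | nil =>
        intro L₂ _ h2 h
        cases L₂ with
        | nil => rfl
        | cons a L =>
          have ha := h2 a (by simp)
          simp only [List.flatten_nil, List.flatten_cons, List.nil_eq, List.append_eq_nil_iff] at h
          exact absurd (h.1 ▸ ha) h0
      | cons a L ih =>
        intro L₂ h1 h2 h
        cases L₂ with
        | nil =>
          have ha := h1 a (by simp)
          simp only [List.flatten_nil, List.flatten_cons, List.append_eq_nil_iff] at h
          exact absurd (h.1 ▸ ha) h0
        | cons b M =>
          have ha : a ∈ S := h1 a (by simp)
          have hb : b ∈ S := h2 b (by simp)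
          simp only [List.flatten_cons] at h
          have hab : a = b := by
            rcases List.prefix_or_prefix_of_prefix (l₃ := a ++ L.flatten) ⟨_, rfl⟩ ⟨_, h.symm⟩ with h' | h'
            · exact hS _ ha _ hb h'
            · exact (hS _ hb _ ha h').symm
          subst hab
          congr 1
          exact ih _ (fun w hw => h1 w (by simp [hw])) (fun w hw => h2 w (by simp [hw])) (List.append_cancel_left h)
    have := InformationTheory.kraft_mcmillan_inequality hd
    simpa using this

theorem stages (U : List Bool →. List Bool) (hU : Partrec U) :
    ∃ E : ℕ → List (List Bool × List Bool), Primrec E ∧ (∀ s, (E s).length ≤ s) ∧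
      (∀ s, ((E s).map Prod.fst).Nodup) ∧ (∀ s p o, (p, o) ∈ E s → o ∈ U p) ∧
      (∀ p o, o ∈ U p → ∃ s0, ∀ s ≥ s0, (p, o) ∈ E s) := by
  obtain ⟨c, hc⟩ := Nat.Partrec.Code.exists_code.1 hU
  let G : ℕ → ℕ → Option (List Bool × List Bool) := fun s n =>
    (decode₂ (List Bool) n).bind fun p => (Nat.Partrec.Code.evaln s c n).bind fun o =>
      (decode (α := List Bool) o).map fun o' => (p, o')
  have hG : Primrec₂ G := by
    refine Primrec.option_bind (Primrec.decode₂.comp Primrec.snd) ?_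
    refine Primrec.option_bind (f := fun (x : (ℕ × ℕ) × List Bool) => Nat.Partrec.Code.evaln x.1.1 c x.1.2) ?_ ?_
    · exact Nat.Partrec.Code.primrec_evaln.comp (Primrec.pair (Primrec.pair (Primrec.fst.comp Primrec.fst) (Primrec.const c)) (Primrec.snd.comp Primrec.fst))
    · refine Primrec.option_map (Primrec.decode.comp Primrec.snd) ?_
      exact Primrec.pair (Primrec.snd.comp (Primrec.fst.comp Primrec.fst)) Primrec.snd
  have hGmem : ∀ s n p o, (p, o) ∈ G s n ↔ encode p = n ∧ ∃ k, k ∈ Nat.Partrec.Code.evaln s c n ∧ decode (α := List Bool) k = some o := by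
    intro s n p o
    simp only [G, Option.mem_def, Option.bind_eq_some_iff, decode₂_eq_some, Option.map_eq_some_iff, Prod.mk.injEq]
    constructor
    · rintro ⟨a, h1, k, h2, o', h3, rfl, rfl⟩
      exact ⟨h1, k, h2, h3⟩
    · rintro ⟨h1, k, h2, h3⟩
      exact ⟨p, h1, k, h2, o, h3, rfl, rfl⟩
  refine ⟨fun s => (List.range s).filterMap (G s), Primrec.listFilterMap Primrec.list_range hG, ?_, ?_, ?_, ?_⟩
  · intro s
    exact (List.length_filterMap_le _ _).trans (by simp)
  · intro s
    rw [List.map_filterMap]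
    refine List.Nodup.filterMap ?_ List.nodup_range
    intro a a' b hb hb'
    simp only [Option.mem_def, Option.map_eq_some_iff, Prod.exists, exists_and_right, exists_eq_right] at hb hb'
    obtain ⟨o, ho⟩ := hb
    obtain ⟨o', ho'⟩ := hb'
    rw [← ((hGmem _ _ _ _).1 ho).1, ← ((hGmem _ _ _ _).1 ho').1]
  · intro s p o h
    rw [List.mem_filterMap] at h
    obtain ⟨n, hn, h⟩ := h
    obtain ⟨h1, k, h2, h3⟩ := (hGmem _ _ _ _).1 h
    have h4 := Nat.Partrec.Code.evaln_sound h2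
    rw [hc] at h4
    simp only [← h1, encodek, Part.coe_some, Part.bind_some, Part.mem_map_iff] at h4
    obtain ⟨o', h5, rfl⟩ := h4
    rw [encodek] at h3
    exact Option.some.inj h3 ▸ h5
  · intro p o h
    have h4 : encode o ∈ Nat.Partrec.Code.eval c (encode p) := by
      rw [hc]
      simp only [encodek, Part.coe_some, Part.bind_some, Part.mem_map_iff]
      exact ⟨o, h, rfl⟩
    obtain ⟨k, hk⟩ := Nat.Partrec.Code.evaln_complete.1 h4
    refine ⟨k, fun s hs => ?_⟩
    have h5 := Nat.Partrec.Code.evaln_mono hs hk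
    rw [List.mem_filterMap]
    refine ⟨encode p, List.mem_range.2 (Nat.Partrec.Code.evaln_bound h5), ?_⟩
    exact (hGmem _ _ _ _).2 ⟨rfl, _, h5, encodek o⟩

/-- Value of a bit string, most significant bit first. -/
def bval (l : List Bool) : ℕ := l.foldl (fun a b => 2 * a + b.toNat) 0

/-- The `n` last bits of `v`. -/
def bitsOf (n v : ℕ) : List Bool := (List.range n).map fun i => decide (v / 2 ^ (n - 1 - i) % 2 = 1)

theorem bval_concat (l : List Bool) (b : Bool) : bval (l ++ [b]) = 2 * bval l + b.toNat := by
  simp [bval]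

theorem bitsOf_succ (n v : ℕ) : bitsOf (n + 1) v = bitsOf n (v / 2) ++ [decide (v % 2 = 1)] := by
  unfold bitsOf
  rw [List.range_succ, List.map_append]
  congr 1
  · apply List.map_congr_left
    intro i hi
    rw [List.mem_range] at hi
    have : n + 1 - 1 - i = (n - 1 - i) + 1 := by omega
    rw [this, pow_succ', Nat.div_div_eq_div_mul]
  · simp

theorem bval_bitsOf (n v : ℕ) : bval (bitsOf n v) = v % 2 ^ n := by
  induction n generalizing v with
  | zero => simp [bitsOf, bval, Nat.mod_one]
  | succ n ih =>
    rw [bitsOf_succ, bval_concat, ih, pow_succ', Nat.mod_mul]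
    rcases Nat.mod_two_eq_zero_or_one v with h | h <;> simp [h]
    omega

theorem length_bitsOf (n v : ℕ) : (bitsOf n v).length = n := by simp [bitsOf]

theorem bval_append (u w : List Bool) : bval (u ++ w) = bval u * 2 ^ w.length + bval w := by
  induction w using List.reverseRecOn with
  | nil => simp [bval]
  | append_singleton w b ih =>
    rw [← List.append_assoc, bval_concat, ih, bval_concat]
    simp [pow_succ]
    ring

theorem bval_lt (w : List Bool) : bval w < 2 ^ w.length := by
  induction w using List.reverseRecOn with
  | nil => simp [bval]
  | append_singleton w b ih =>
    rw [bval_concat]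
    have := Bool.toNat_le b
    simp [pow_succ]
    omega

theorem primrec_bval : Primrec bval := by
  refine Primrec.list_foldl (h := fun _ (p : ℕ × Bool) => 2 * p.1 + p.2.toNat) Primrec.id (Primrec.const 0) ?_
  exact Primrec.nat_add.comp (Primrec.nat_double.comp (Primrec.fst.comp Primrec.snd)) ((Primrec.dom_finite Bool.toNat).comp (Primrec.snd.comp Primrec.snd))

/-- The Boltzmann weight of a program of length `l` at temperature `x`. -/
noncomputable def wt (x : ℝ) (p : List Bool) : ℝ := (2 : ℝ) ^ (-(p.length : ℝ) / x)

theorem wt_pos (x : ℝ) (p : List Bool) : 0 < wt x p := Real.rpow_pos_of_pos two_pos _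

theorem wt_one (p : List Bool) : wt 1 p = (1 / 2 : ℝ) ^ p.length := by
  unfold wt
  rw [div_one, Real.rpow_neg two_pos.le, Real.rpow_natCast]
  simp

theorem wt_mono {x y : ℝ} (hx : 0 < x) (hxy : x ≤ y) (p : List Bool) : wt x p ≤ wt y p := by
  unfold wt
  apply Real.rpow_le_rpow_of_exponent_le one_le_two
  rw [neg_div, neg_div, neg_le_neg_iff]
  exact div_le_div_of_nonneg_left (by positivity) hx hxy

theorem sum_map_le {A : Set (List Bool)} (f : List Bool → ℝ) (G : Finset A) (c : ℝ)
    (h : ∀ F : Finset (List Bool), (F : Set (List Bool)) ⊆ A → ∑ p ∈ F, f p ≤ c) :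
    ∑ p ∈ G, f p ≤ c := by
  have := h (G.map (Function.Embedding.subtype _)) (by
    intro p hp
    simp only [Finset.coe_map, Set.mem_image] at hp
    obtain ⟨q, _, rfl⟩ := hp
    exact q.2)
  rw [Finset.sum_map] at this
  exact this

theorem summ_wt {A : Set (List Bool)} (hA : ∀ F : Finset (List Bool), (F : Set (List Bool)) ⊆ A → ∑ p ∈ F, wt 1 p ≤ 1)
    {x : ℝ} (hx : 0 < x) (hx1 : x ≤ 1) : Summable (fun p : A => wt x p) := by
  apply summable_of_sum_le (c := 1) (fun p => (wt_pos _ _).le)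
  intro G
  refine sum_map_le (wt x) G 1 fun F hF => ?_
  exact (Finset.sum_le_sum fun p _ => wt_mono hx hx1 p).trans (hA F hF)

theorem sum_le_Z {A : Set (List Bool)} (f : List Bool → ℝ) (hf : ∀ p, 0 ≤ f p) (hs : Summable (fun p : A => f p))
    (F : Finset (List Bool)) (hF : (F : Set (List Bool)) ⊆ A) : ∑ p ∈ F, f p ≤ ∑' p : A, f p := by
  classical
  have : ∑ p ∈ F, f p = ∑ p ∈ F.subtype (· ∈ A), f p := by
    rw [Finset.sum_subtype_of_mem]
    exact fun x hx => hF hx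
  rw [this]
  exact hs.sum_le_tsum _ (fun p _ => hf p)

theorem Z_approx {A : Set (List Bool)} (f : List Bool → ℝ) (hf : ∀ p, 0 ≤ f p) (hs : Summable (fun p : A => f p))
    (D : ℕ → Finset (List Bool))
    (hD' : ∀ p ∈ A, ∃ s0, ∀ s ≥ s0, p ∈ D s) (c : ℝ) (hc : c < ∑' p : A, f p) :
    ∃ s, c < ∑ p ∈ D s, f p := by
  classical
  by_contra hcon
  push Not at hcon
  have : ∑' p : A, f p ≤ c := by
    apply hs.tsum_le_of_sum_le
    intro G
    refine sum_map_le f G c fun F hF => ?_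
    have : ∃ s, F ⊆ D s := by
      choose! s0 hs0 using hD'
      refine ⟨F.sup s0, fun p hp => ?_⟩
      exact hs0 p (hF hp) _ (Finset.le_sup hp)
    obtain ⟨s, hs⟩ := this
    exact (Finset.sum_le_sum_of_subset_of_nonneg hs fun p _ _ => hf p).trans (hcon s)
  linarith

/-- tail estimate -/
theorem tail_bound {A : Set (List Bool)} (hA : ∀ F : Finset (List Bool), (F : Set (List Bool)) ⊆ A → ∑ p ∈ F, wt 1 p ≤ 1)
    {T : ℝ} (hT0 : 0 < T) (hT1 : T < 1) (F : Finset (List Bool)) (hF : (F : Set (List Bool)) ⊆ A) (m : ℕ)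
    (h : ∑' p : A, wt 1 p - ∑ p ∈ F, wt 1 p ≤ (1 / 2 : ℝ) ^ m) :
    ∑' p : A, wt T p ≤ ∑ p ∈ F, wt T p + (2 : ℝ) ^ (-(m : ℝ) / T) := by
  classical
  have hs1 := summ_wt hA one_pos le_rfl
  have hsT := summ_wt hA hT0 hT1.le
  apply hsT.tsum_le_of_sum_le
  intro G
  refine sum_map_le (wt T) G _ fun H hH => ?_
  have h1 : ∑ p ∈ H, wt T p ≤ ∑ p ∈ F, wt T p + ∑ p ∈ H \ F, wt T p := by
    rw [← Finset.sum_union Finset.disjoint_sdiff]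
    apply Finset.sum_le_sum_of_subset_of_nonneg _ fun p _ _ => (wt_pos _ _).le
    intro p hp
    simp only [Finset.union_sdiff_self_eq_union, Finset.mem_union]
    exact Or.inr hp
  have h2 : ∑ p ∈ H \ F, wt 1 p ≤ (1 / 2 : ℝ) ^ m := by
    have h3 : ∑ p ∈ F ∪ (H \ F), wt 1 p ≤ ∑' p : A, wt 1 p := by
      refine sum_le_Z (wt 1) (fun p => (wt_pos _ _).le) hs1 _ ?_
      intro p hp
      simp only [Finset.coe_union, Finset.coe_sdiff, Set.mem_union, Set.mem_diff] at hp
      rcases hp with hp | hp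
      · exact hF hp
      · exact hH hp.1
    rw [Finset.sum_union Finset.disjoint_sdiff] at h3
    linarith
  have hid : ∀ n : ℕ, (2 : ℝ) ^ (-(n : ℝ) / T) = (1 / 2 : ℝ) ^ n * ((1 / 2 : ℝ) ^ n) ^ (1 / T - 1) := by
    intro n
    have h4 : (1 / 2 : ℝ) ^ n = (2 : ℝ) ^ (-(n : ℝ)) := by
      rw [Real.rpow_neg two_pos.le, Real.rpow_natCast]; simp
    rw [h4, ← Real.rpow_mul two_pos.le, ← Real.rpow_add two_pos]
    congr 1
    ring
  have hexp : 0 ≤ 1 / T - 1 := by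
    rw [sub_nonneg, le_div_iff₀ hT0]; linarith
  have h5 : ∑ p ∈ H \ F, wt T p ≤ (2 : ℝ) ^ (-(m : ℝ) / T) := by
    calc ∑ p ∈ H \ F, wt T p ≤ ∑ p ∈ H \ F, wt 1 p * ((1 / 2 : ℝ) ^ m) ^ (1 / T - 1) := by
          apply Finset.sum_le_sum
          intro p hp
          have h6 : wt 1 p ≤ (1 / 2 : ℝ) ^ m :=
            (Finset.single_le_sum (f := wt 1) (fun q _ => (wt_pos _ _).le) hp).trans h2
          unfold wt at h6 ⊢
          rw [hid p.length]
          have h7 := wt_one p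
          unfold wt at h7
          rw [h7] at h6 ⊢
          gcongr
      _ = (∑ p ∈ H \ F, wt 1 p) * ((1 / 2 : ℝ) ^ m) ^ (1 / T - 1) := by rw [Finset.sum_mul]
      _ ≤ (1 / 2 : ℝ) ^ m * ((1 / 2 : ℝ) ^ m) ^ (1 / T - 1) := by gcongr
      _ = _ := (hid m).symm
  linarith

theorem one_sub_two_rpow_le (u : ℝ) (hu : 0 ≤ u) : 1 - (2 : ℝ) ^ (-u) ≤ u := by
  have h := Real.add_one_le_exp (Real.log 2 * (-u))
  rw [Real.rpow_def_of_pos two_pos]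
  have := Real.log_two_lt_d9
  nlinarith

theorem one_add_le_two_rpow (u : ℝ) (hu : 0 ≤ u) : 1 + u / 2 ≤ (2 : ℝ) ^ u := by
  have h := Real.add_one_le_exp (Real.log 2 * u)
  rw [Real.rpow_def_of_pos two_pos]
  have := Real.log_two_gt_d9
  nlinarith

theorem wt_lip {T t0 : ℝ} (hT0 : 0 < T) (ht0 : t0 < 1) (hTt : T < t0) :
    ∃ C : ℝ, 0 < C ∧ ∀ t, T < t → t ≤ t0 → ∀ p, wt t p - wt T p ≤ C * (t - T) * wt 1 p := by
  have ht0' : 0 < t0 := hT0.trans hTt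
  have hd : 0 < 1 / t0 - 1 := by
    rw [sub_pos, lt_div_iff₀ ht0']; linarith
  refine ⟨2 / (1 / t0 - 1) * (1 / (T * T)), by positivity, ?_⟩
  intro t h1 h2 p
  have ht : 0 < t := hT0.trans h1
  set l : ℝ := (p.length : ℝ) with hl
  have hl0 : 0 ≤ l := by positivity
  set u := l * (1 / T - 1 / t) with hu
  have hdiff : 1 / T - 1 / t = (t - T) / (T * t) := by field_simp
  have hu0 : 0 ≤ u := by
    rw [hu, hdiff]
    have : 0 ≤ t - T := by linarith
    positivity
  have hule : u ≤ l * ((t - T) * (1 / (T * T))) := by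
    rw [hu, hdiff]
    apply mul_le_mul_of_nonneg_left _ hl0
    rw [div_eq_mul_one_div]
    apply mul_le_mul_of_nonneg_left _ (by linarith)
    apply one_div_le_one_div_of_le (by positivity)
    exact mul_le_mul_of_nonneg_left h1.le hT0.le
  have e1 : wt T p = wt t p * (2 : ℝ) ^ (-u) := by
    unfold wt
    rw [← Real.rpow_add two_pos]
    congr 1
    rw [hu]; ring
  have e2 : wt t p ≤ wt 1 p * (2 : ℝ) ^ (-(l * (1 / t0 - 1))) := by
    unfold wt
    rw [← Real.rpow_add two_pos]
    apply Real.rpow_le_rpow_of_exponent_le one_le_two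
    have : l / t0 ≤ l / t := div_le_div_of_nonneg_left hl0 ht h2
    rw [← hl]
    have e3 : -l / 1 + -(l * (1 / t0 - 1)) = - (l / t0) := by ring
    rw [e3, neg_div]
    linarith
  have e4 : l * (2 : ℝ) ^ (-(l * (1 / t0 - 1))) ≤ 2 / (1 / t0 - 1) := by
    rw [Real.rpow_neg two_pos.le, ← div_eq_mul_inv, div_le_div_iff₀ (by positivity) hd]
    have := one_add_le_two_rpow (l * (1 / t0 - 1)) (by positivity)
    nlinarith
  have hw := wt_pos 1 p
  calc wt t p - wt T p = wt t p * (1 - (2 : ℝ) ^ (-u)) := by rw [e1]; ring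
    _ ≤ wt t p * u := mul_le_mul_of_nonneg_left (one_sub_two_rpow_le u hu0) (wt_pos _ _).le
    _ ≤ (wt 1 p * (2 : ℝ) ^ (-(l * (1 / t0 - 1)))) * (l * ((t - T) * (1 / (T * T)))) := by
        apply mul_le_mul e2 hule hu0 (by positivity)
    _ = (l * (2 : ℝ) ^ (-(l * (1 / t0 - 1)))) * ((t - T) * (1 / (T * T)) * wt 1 p) := by ring
    _ ≤ 2 / (1 / t0 - 1) * ((t - T) * (1 / (T * T)) * wt 1 p) := by
        apply mul_le_mul_of_nonneg_right e4
        have : 0 ≤ t - T := by linarith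
        positivity
    _ = _ := by ring

/-- lower Lipschitz bound for one term -/
theorem wt_lower {T : ℝ} (hT0 : 0 < T) (hT1 : T < 1) (p : List Bool) (hp : 1 ≤ p.length) {x : ℝ} (hx : 0 < x) (hxT : x ≤ T) :
    wt T p * (T - x) / 4 ≤ wt T p - wt x p := by
  set l : ℝ := (p.length : ℝ) with hl
  have hl0 : 1 ≤ l := by rw [hl]; exact_mod_cast hp
  set u := l * (1 / x - 1 / T) with hu
  have hdiff : 1 / x - 1 / T = (T - x) / (x * T) := by field_simp
  have hul : T - x ≤ u := by
    rw [hu, hdiff]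
    have h1 : T - x ≤ (T - x) / (x * T) := by
      rw [le_div_iff₀ (by positivity)]
      have : x * T ≤ 1 := by nlinarith
      nlinarith
    nlinarith
  have e1 : wt x p = wt T p * (2 : ℝ) ^ (-u) := by
    unfold wt
    rw [← Real.rpow_add two_pos]
    congr 1
    rw [hu]; ring
  have e2 : (2 : ℝ) ^ (-u) ≤ 1 - (T - x) / 4 := by
    have h1 : (2 : ℝ) ^ (-u) ≤ (2 : ℝ) ^ (-(T - x)) :=
      Real.rpow_le_rpow_of_exponent_le one_le_two (by linarith)
    refine h1.trans ?_
    have h2 := one_add_le_two_rpow (T - x) (by linarith)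
    rw [Real.rpow_neg two_pos.le, inv_le_comm₀ (by positivity) (by linarith)]
    refine le_trans ?_ h2
    rw [inv_le_iff_one_le_mul₀ (by linarith)]
    nlinarith
  have hw := wt_pos T p
  rw [e1]
  nlinarith

/-- strict version upward -/
theorem wt_strict {T t : ℝ} (hT0 : 0 < T) (hTt : T < t) (p : List Bool) (hp : 1 ≤ p.length) : wt T p < wt t p := by
  unfold wt
  apply Real.rpow_lt_rpow_of_exponent_lt one_lt_two
  rw [neg_div, neg_div, neg_lt_neg_iff]
  exact div_lt_div_of_pos_left (by exact_mod_cast hp) hT0 hTt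

/-- Integer part of `2 ^ N * 2 ^ (-l * b / a)`. -/
def Rfun (l a b N : ℕ) : ℕ := Nat.findGreatest (fun r => r ^ a * 2 ^ (l * b) ≤ 2 ^ (N * a)) (2 ^ N)

theorem Rfun_spec (p : List Bool) (a b N : ℕ) (ha : 0 < a) (hb : 0 < b) :
    (Rfun p.length a b N : ℝ) ≤ 2 ^ N * wt ((a : ℝ) / b) p ∧
      2 ^ N * wt ((a : ℝ) / b) p ≤ Rfun p.length a b N + 1 := by
  set y : ℝ := 2 ^ N * wt ((a : ℝ) / b) p with hy
  have hy0 : 0 ≤ y := by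
    have := wt_pos ((a : ℝ) / b) p
    positivity
  have hya : y ^ a * 2 ^ (p.length * b) = 2 ^ (N * a) := by
    rw [hy, mul_pow, ← pow_mul, mul_assoc]
    have : wt ((a : ℝ) / b) p ^ a * 2 ^ (p.length * b) = 1 := by
      unfold wt
      rw [← Real.rpow_natCast, ← Real.rpow_mul two_pos.le, ← Real.rpow_natCast, ← Real.rpow_add two_pos]
      have ha' : (a : ℝ) ≠ 0 := by positivity
      have hb' : (b : ℝ) ≠ 0 := by positivity
      have : -(p.length : ℝ) / ((a : ℝ) / b) * a + ((p.length * b : ℕ) : ℝ) = 0 := by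
        push_cast
        field_simp
        ring
      rw [this, Real.rpow_zero]
    rw [this, mul_one]
  have hiff : ∀ r : ℕ, r ^ a * 2 ^ (p.length * b) ≤ 2 ^ (N * a) ↔ (r : ℝ) ≤ y := by
    intro r
    have h1 : r ^ a * 2 ^ (p.length * b) ≤ 2 ^ (N * a) ↔ (r : ℝ) ^ a * 2 ^ (p.length * b) ≤ 2 ^ (N * a) := by
      exact_mod_cast Iff.rfl
    rw [h1, ← hya, mul_le_mul_iff_left₀ (by positivity), pow_le_pow_iff_left₀ (by positivity) hy0 ha.ne']
  have hyN : y ≤ 2 ^ N := by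
    have : wt ((a : ℝ) / b) p ≤ 1 := by
      unfold wt
      apply Real.rpow_le_one_of_one_le_of_nonpos one_le_two
      rw [neg_div]
      have : 0 ≤ (p.length : ℝ) / ((a : ℝ) / b) := by positivity
      linarith
    rw [hy]
    have h2 : (0:ℝ) < 2 ^ N := by positivity
    nlinarith
  constructor
  · rw [← hiff]
    refine Nat.findGreatest_spec (P := fun r => r ^ a * 2 ^ (p.length * b) ≤ 2 ^ (N * a)) (m := 0) (Nat.zero_le _) ?_
    rw [hiff]
    exact_mod_cast hy0
  · by_contra hcon
    push Not at hcon
    have h3 : Rfun p.length a b N + 1 ≤ 2 ^ N := by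
      have : (((Rfun p.length a b N + 1 : ℕ)) : ℝ) ≤ ((2 ^ N : ℕ) : ℝ) := by push_cast; linarith
      exact_mod_cast this
    have h4 := Nat.findGreatest_is_greatest (P := fun r => r ^ a * 2 ^ (p.length * b) ≤ 2 ^ (N * a)) (n := 2 ^ N) (k := Rfun p.length a b N + 1) (Nat.lt_succ_self _) h3
    apply h4
    rw [hiff]
    push_cast
    exact hcon.le

/-- Sum of the integer lower approximations over a finite list of programs. -/
def Sfun (L : List (List Bool × List Bool)) (a b N : ℕ) : ℕ :=
  (L.map fun po => Rfun po.1.length a b N).sum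

theorem Sfun_spec (L : List (List Bool × List Bool)) (hL : (L.map Prod.fst).Nodup) (a b N : ℕ) (ha : 0 < a) (hb : 0 < b) :
    (Sfun L a b N : ℝ) ≤ 2 ^ N * ∑ p ∈ (L.map Prod.fst).toFinset, wt ((a : ℝ) / b) p ∧
      2 ^ N * ∑ p ∈ (L.map Prod.fst).toFinset, wt ((a : ℝ) / b) p ≤ Sfun L a b N + L.length := by
  rw [List.sum_toFinset _ hL]
  clear hL
  induction L with
  | nil => simp [Sfun]
  | cons q L ih =>
    have h := Rfun_spec q.1 a b N ha hb
    have hS : (Sfun (q :: L) a b N : ℝ) = Rfun q.1.length a b N + Sfun L a b N := by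
      simp [Sfun]
    rw [hS]
    simp only [List.map_cons, List.sum_cons, List.length_cons]
    push_cast
    rw [mul_add]
    constructor <;> linarith [ih.1, ih.2, h.1, h.2]

theorem primrec_Rfun (hp : Primrec₂ (fun a b : ℕ => a ^ b)) :
    Primrec (fun x : ℕ × ℕ × ℕ × ℕ => Rfun x.1 x.2.1 x.2.2.1 x.2.2.2) := by
  have h2 : Primrec (fun n : ℕ => 2 ^ n) := hp.comp (Primrec.const 2) Primrec.id
  have hl : Primrec (fun x : (ℕ × ℕ × ℕ × ℕ) × ℕ => x.1.1) := Primrec.fst.comp Primrec.fst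
  have ha : Primrec (fun x : (ℕ × ℕ × ℕ × ℕ) × ℕ => x.1.2.1) :=
    Primrec.fst.comp (Primrec.snd.comp Primrec.fst)
  have hb : Primrec (fun x : (ℕ × ℕ × ℕ × ℕ) × ℕ => x.1.2.2.1) :=
    Primrec.fst.comp (Primrec.snd.comp (Primrec.snd.comp Primrec.fst))
  have hN : Primrec (fun x : (ℕ × ℕ × ℕ × ℕ) × ℕ => x.1.2.2.2) :=
    Primrec.snd.comp (Primrec.snd.comp (Primrec.snd.comp Primrec.fst))
  refine Primrec.nat_findGreatest (f := fun x : ℕ × ℕ × ℕ × ℕ => 2 ^ x.2.2.2)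
    (p := fun x r => r ^ x.2.1 * 2 ^ (x.1 * x.2.2.1) ≤ 2 ^ (x.2.2.2 * x.2.1)) ?_ ?_
  · exact h2.comp (Primrec.snd.comp (Primrec.snd.comp Primrec.snd))
  · refine Primrec.nat_le.comp (Primrec.nat_mul.comp (hp.comp Primrec.snd ha) (h2.comp (Primrec.nat_mul.comp hl hb)))
      (h2.comp (Primrec.nat_mul.comp hN ha))

theorem primrec_Sfun (hp : Primrec₂ (fun a b : ℕ => a ^ b)) :
    Primrec (fun x : List (List Bool × List Bool) × ℕ × ℕ × ℕ => Sfun x.1 x.2.1 x.2.2.1 x.2.2.2) := by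
  have hsum : Primrec (fun L : List ℕ => L.sum) := by
    refine (Primrec.list_foldr (h := fun _ (p : ℕ × ℕ) => p.1 + p.2) Primrec.id (Primrec.const 0)
      (Primrec.nat_add.comp (Primrec.fst.comp Primrec.snd) (Primrec.snd.comp Primrec.snd))).of_eq ?_
    intro L
    rfl
  refine hsum.comp (Primrec.list_map Primrec.fst ?_)
  exact (primrec_Rfun hp).comp (Primrec.pair (Primrec.list_length.comp (Primrec.fst.comp Primrec.snd)) (Primrec.snd.comp Primrec.fst))
/-- Unbounded search. -/
def srch (p : ℕ → Bool) : Part ℕ := Nat.rfind (fun x => Part.some (p x))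

theorem srch_ex {p : ℕ → Bool} {m : ℕ} (h : p m = true) : ∃ n ∈ srch p, n ≤ m := Nat.rfind_min' h

theorem srch_spec {p : ℕ → Bool} {n : ℕ} (h : n ∈ srch p) : p n = true := by
  have := Nat.rfind_spec h
  exact (Part.mem_some_iff.1 this).symm

theorem srch_partrec {α : Type*} [Primcodable α] {P : α → ℕ → Bool} (h : Computable₂ P) :
    Partrec fun a => srch (P a) := Partrec.rfind h.partrec₂

theorem bits_floor {T : ℝ} (hT0 : 0 < T) (hT1 : T < 1) (n : ℕ) :
    firstBits T n = bitsOf n ⌊T * 2 ^ n⌋₊ := by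
  unfold firstBits bitsOf
  apply List.map_congr_left
  intro i hi
  rw [List.mem_range] at hi
  unfold bitOf
  have h1 : Int.fract T = T := Int.fract_eq_self.2 ⟨hT0.le, hT1⟩
  rw [h1]
  have h2 : ⌊T * 2 ^ n⌋₊ / 2 ^ (n - 1 - i) = ⌊T * 2 ^ (i + 1)⌋₊ := by
    rw [← Nat.floor_div_natCast]
    congr 1
    push_cast
    rw [div_eq_iff (by positivity), mul_assoc, ← pow_add]
    congr 2
    omega
  rw [h2]
  have h3 : ⌊T * 2 ^ (i + 1)⌋ = ((⌊T * 2 ^ (i + 1)⌋₊ : ℕ) : ℤ) := (Int.natCast_floor_eq_floor (by positivity)).symm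
  rw [h3]
  congr 1
  apply propext
  omega

theorem exists_prog (U : List Bool →. List Bool) (hU : OptimalMachine U) (s : List Bool) : ∃ p, s ∈ U p := by
  let C : List Bool →. List Bool := fun p => ((if p = [] then some s else none : Option (List Bool)) : Part (List Bool))
  have hC : Partrec C := by
    apply Computable.ofOption
    exact (Primrec.ite (Primrec.eq.comp Primrec.id (Primrec.const [])) (Primrec.const _) (Primrec.const _)).to_comp
  have hP : PrefixFree C := by
    intro p q hp hq _
    have aux : ∀ p, (C p).Dom → p = [] := by
      intro p hp
      by_contra h
      simp [C, h] at hp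
    rw [aux p hp, aux q hq]
  obtain ⟨d, hd⟩ := hU.2.2 C hC hP
  obtain ⟨p', h, _⟩ := hd [] s (by simp [C])
  exact ⟨p', h⟩

theorem exists_prog_pos (U : List Bool →. List Bool) (hU : OptimalMachine U) : ∃ p, (U p).Dom ∧ 1 ≤ p.length := by
  obtain ⟨p, hp⟩ := exists_prog U hU []
  obtain ⟨q, hq⟩ := exists_prog U hU [true]
  by_cases h : p.length = 0
  · refine ⟨q, Part.dom_iff_mem.2 ⟨_, hq⟩, ?_⟩
    by_contra h'
    have h1 : p = [] := List.length_eq_zero_iff.1 h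
    have h2 : q = [] := List.length_eq_zero_iff.1 (by omega)
    subst h1 h2
    have := Part.mem_unique hp hq
    simp at this
  · exact ⟨p, Part.dom_iff_mem.2 ⟨_, hp⟩, by omega⟩

theorem complexity_attained (U : List Bool →. List Bool) (hU : OptimalMachine U) (s : List Bool) :
    ∃ p, p.length = complexity U s ∧ s ∈ U p := by
  have : {n | ∃ p : List Bool, p.length = n ∧ s ∈ U p}.Nonempty := by
    obtain ⟨p, hp⟩ := exists_prog U hU s
    exact ⟨_, p, rfl, hp⟩
  exact Nat.sInf_mem this

theorem complexity_le (U : List Bool →. List Bool) (s p : List Bool) (h : s ∈ U p) : complexity U s ≤ p.length :=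
  Nat.sInf_le ⟨p, rfl, h⟩

/-- Data of an effective enumeration of `U`. -/
structure Enum (U : List Bool →. List Bool) (E : ℕ → List (List Bool × List Bool)) : Prop where
  prim : Primrec E
  len : ∀ s, (E s).length ≤ s
  nodup : ∀ s, ((E s).map Prod.fst).Nodup
  sound : ∀ s p o, (p, o) ∈ E s → o ∈ U p
  complete : ∀ p o, o ∈ U p → ∃ s0, ∀ s ≥ s0, (p, o) ∈ E s

/-- The domain of `U`. -/
def domS (U : List Bool →. List Bool) : Set (List Bool) := {p | (U p).Dom}

/-- The finite set of programs found by stage `s`. -/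
def stg (E : ℕ → List (List Bool × List Bool)) (s : ℕ) : Finset (List Bool) := ((E s).map Prod.fst).toFinset

theorem mem_stg {E : ℕ → List (List Bool × List Bool)} {s : ℕ} {p : List Bool} :
    p ∈ stg E s ↔ ∃ o, (p, o) ∈ E s := by
  simp [stg]

theorem Enum.sub {U : List Bool →. List Bool} {E : ℕ → List (List Bool × List Bool)} (h : Enum U E) (s : ℕ) :
    (stg E s : Set (List Bool)) ⊆ domS U := by
  intro p hp
  obtain ⟨o, ho⟩ := mem_stg.1 hp
  exact Part.dom_iff_mem.2 ⟨o, h.sound _ _ _ ho⟩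

theorem Enum.exh {U : List Bool →. List Bool} {E : ℕ → List (List Bool × List Bool)} (h : Enum U E) :
    ∀ p ∈ domS U, ∃ s0, ∀ s ≥ s0, p ∈ stg E s := by
  intro p hp
  obtain ⟨o, ho⟩ := Part.dom_iff_mem.1 hp
  obtain ⟨s0, hs0⟩ := h.complete p o ho
  exact ⟨s0, fun s hs => mem_stg.2 ⟨o, hs0 s hs⟩⟩

theorem kraft_dom {U : List Bool →. List Bool} (hU : PrefixFree U) (F : Finset (List Bool))
    (hF : (F : Set (List Bool)) ⊆ domS U) : ∑ p ∈ F, wt 1 p ≤ 1 := by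
  simp only [wt_one]
  exact kraft_prefix F fun p hp q hq h => hU p q (hF hp) (hF hq) h

theorem Zfun_eq (U : List Bool →. List Bool) (x : ℝ) : Zfun U x = ∑' p : domS U, wt x p := rfl

theorem computable_S {α : Type*} [Primcodable α] {L : α → List (List Bool × List Bool)} {a b N : α → ℕ}
    (hL : Computable L) (ha : Computable a) (hb : Computable b) (hN : Computable N) :
    Computable fun x => Sfun (L x) (a x) (b x) (N x) :=
  (primrec_Sfun primrec_pow).to_comp.comp (hL.pair (ha.pair (hb.pair hN)))

theorem computable_two_pow {α : Type*} [Primcodable α] {a : α → ℕ} (ha : Computable a) :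
    Computable fun x => 2 ^ a x :=
  primrec_pow.to_comp.comp (Computable.const 2) ha

theorem Sfun_stg {U : List Bool →. List Bool} {E : ℕ → List (List Bool × List Bool)} (h : Enum U E)
    (s a b N : ℕ) (ha : 0 < a) (hb : 0 < b) :
    (Sfun (E s) a b N : ℝ) ≤ 2 ^ N * ∑ p ∈ stg E s, wt ((a : ℝ) / b) p ∧
      2 ^ N * ∑ p ∈ stg E s, wt ((a : ℝ) / b) p ≤ Sfun (E s) a b N + s := by
  have h1 := Sfun_spec (E s) (h.nodup s) a b N ha hb
  refine ⟨h1.1, h1.2.trans ?_⟩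
  have : ((E s).length : ℝ) ≤ s := by exact_mod_cast h.len s
  linarith

theorem lower_bound (U : List Bool →. List Bool) (hU : OptimalMachine U) (T : ℝ) (hT0 : 0 < T) (hT1 : T < 1)
    (g : ℕ → ℕ) (hg : Computable g) (hgz : ∀ n, |Zfun U T * 2 ^ n - g n| ≤ 2) :
    WeaklyChaitinTRandom U T T := by
  obtain ⟨E, hE1, hE2, hE3, hE4, hE5⟩ := stages U hU.1
  have hE : Enum U E := ⟨hE1, hE2, hE3, hE4, hE5⟩
  have hA := fun F hF => kraft_dom hU.2.1 F hF
  let P : List Bool → ℕ → Bool := fun w u =>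
    decide (g u.unpair.2 + 2 < Sfun (E u.unpair.1) (bval w + 1) (2 ^ w.length) u.unpair.2)
  have hP : Computable₂ P := by
    have hu1 : Computable (fun x : List Bool × ℕ => x.2.unpair.1) := Computable.fst.comp (Computable.unpair.comp Computable.snd)
    have hu2 : Computable (fun x : List Bool × ℕ => x.2.unpair.2) := Computable.snd.comp (Computable.unpair.comp Computable.snd)
    refine (Primrec.nat_lt.decide.to_comp).comp (Primrec.nat_add.to_comp.comp (hg.comp hu2) (Computable.const 2)) ?_
    exact computable_S (hE.prim.to_comp.comp hu1) (Computable.succ.comp (primrec_bval.to_comp.comp Computable.fst))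
      (computable_two_pow (Computable.list_length.comp Computable.fst)) hu2
  let outp : ℕ → List Bool := fun s => ((E s).map Prod.snd).flatten ++ [true]
  have houtp : Primrec outp :=
    Primrec.list_append.comp (Primrec.list_flatten.comp (Primrec.list_map hE.prim (Primrec.snd.comp Primrec.snd))) (Primrec.const _)
  let C : List Bool →. List Bool := fun p => (U p).bind fun w => (srch (P w)).map fun u => outp u.unpair.1
  have hC : Partrec C := by
    refine Partrec.bind hU.1 ?_
    refine Partrec.map ((srch_partrec hP).comp Computable.snd) ?_
    exact houtp.to_comp.comp (Computable.fst.comp (Computable.unpair.comp Computable.snd))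
  have hCP : PrefixFree C := by
    intro p q hp hq h
    exact hU.2.1 p q hp.1 hq.1 h
  obtain ⟨d, hd⟩ := hU.2.2 C hC hCP
  obtain ⟨t0, hTt0, ht01⟩ := exists_between hT1
  obtain ⟨K, hK0, hK⟩ := wt_lip hT0 ht01 hTt0
  obtain ⟨n0, hn0⟩ := exists_pow_lt_of_lt_one (sub_pos.2 hTt0) (by norm_num : (1 / 2 : ℝ) < 1)
  obtain ⟨p0, hp0, hp0l⟩ := exists_prog_pos U hU
  obtain ⟨k, hk⟩ := pow_unbounded_of_one_lt K (one_lt_two)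
  refine ⟨n0 + k + d, fun n => ?_⟩
  set N : ℕ := (n : ℕ) with hN
  by_cases hsmall : N < n0
  · have h1 : T * N ≤ N := by
      have : (0:ℝ) ≤ N := by positivity
      nlinarith
    have h2 : (N : ℝ) ≤ n0 := by exact_mod_cast hsmall.le
    have h3 : (0:ℝ) ≤ complexity U (firstBits T N) := by positivity
    push_cast
    have : (0:ℝ) ≤ k := by positivity
    have : (0:ℝ) ≤ d := by positivity
    linarith
  push Not at hsmall
  have h2N : (0:ℝ) < 2 ^ N := by positivity
  set j := ⌊T * 2 ^ N⌋₊ with hj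
  have hj1 : (j : ℝ) ≤ T * 2 ^ N := Nat.floor_le (by positivity)
  have hj2 : T * 2 ^ N < j + 1 := Nat.lt_floor_add_one _
  set t : ℝ := ((j + 1 : ℕ) : ℝ) / ((2 ^ N : ℕ) : ℝ) with ht
  have htT : T < t := by
    rw [ht, lt_div_iff₀ (by positivity)]
    push_cast
    exact hj2
  have htT' : t - T ≤ (1 / 2) ^ N := by
    rw [ht, sub_le_iff_le_add, div_le_iff₀ (by positivity), add_mul]
    push_cast
    rw [one_div, inv_pow, inv_mul_cancel₀ h2N.ne']
    linarith
  have htt0 : t ≤ t0 := by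
    have : (1 / 2 : ℝ) ^ N ≤ (1 / 2) ^ n0 := pow_le_pow_of_le_one (by norm_num) (by norm_num) hsmall
    linarith
  have ht0 : 0 < t := hT0.trans htT
  have hjlt : j < 2 ^ N := by
    rw [hj, Nat.floor_lt (by positivity)]
    push_cast
    nlinarith
  have hbv : bval (firstBits T N) = j := by
    rw [bits_floor hT0 hT1, bval_bitsOf, Nat.mod_eq_of_lt hjlt]
  have hlen : (firstBits T N).length = N := by simp [firstBits]
  have hsT := summ_wt hA hT0 hT1.le
  have hst := summ_wt hA ht0 (htt0.trans ht01.le)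
  have hZlt : Zfun U T < ∑' p : domS U, wt t p := by
    rw [Zfun_eq]
    exact hsT.tsum_lt_tsum (i := ⟨p0, hp0⟩) (fun p => wt_mono hT0 htT.le p) (wt_strict hT0 htT p0 hp0l) hst
  obtain ⟨c, hc1, hc2⟩ := exists_between hZlt
  obtain ⟨s, hs⟩ := Z_approx (wt t) (fun p => (wt_pos _ _).le) hst (stg E) hE.exh c hc2
  obtain ⟨M, hM⟩ := pow_unbounded_of_one_lt ((s + 4) / (c - Zfun U T)) (one_lt_two)
  have hPs : P (firstBits T N) (Nat.pair s M) = true := by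
    simp only [P, Nat.unpair_pair, hbv, hlen, decide_eq_true_eq]
    have h1 := (Sfun_stg hE s (j + 1) (2 ^ N) M (Nat.succ_pos _) (by positivity)).2
    rw [← ht] at h1
    have h2 := (abs_le.1 (hgz M)).1
    rw [div_lt_iff₀ (by linarith)] at hM
    have h3 : (2:ℝ) ^ M * c < 2 ^ M * ∑ p ∈ stg E s, wt t p := by
      apply mul_lt_mul_of_pos_left hs; positivity
    have h4 : ((g M + 2 : ℕ) : ℝ) < (Sfun (E s) (j + 1) (2 ^ N) M : ℝ) := by
      push_cast
      nlinarith
    exact_mod_cast h4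
  obtain ⟨u, hu, _⟩ := srch_ex hPs
  have hPu := srch_spec hu
  simp only [P, hbv, hlen, decide_eq_true_eq] at hPu
  set s' := u.unpair.1 with hs'
  set M' := u.unpair.2
  obtain ⟨p, hpl, hp⟩ := complexity_attained U hU (firstBits T N)
  have hCp : outp s' ∈ C p := by
    simp only [C, Part.mem_bind_iff, Part.mem_map_iff]
    exact ⟨_, hp, u, hu, rfl⟩
  obtain ⟨p', hp', hp'l⟩ := hd p _ hCp
  have hnot : p' ∉ stg E s' := by
    intro hmem
    obtain ⟨o, ho⟩ := mem_stg.1 hmem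
    have heq := Part.mem_unique hp' (hE.sound _ _ _ ho)
    have hm : o ∈ (E s').map Prod.snd := List.mem_map.2 ⟨(p', o), ho, rfl⟩
    have h1 : o.length ≤ ((E s').map Prod.snd).flatten.length :=
      (List.sublist_flatten_of_mem hm).length_le
    have h2 := congrArg List.length heq
    simp only [outp, List.length_append, List.length_singleton] at h2
    omega
  have hdom : p' ∈ domS U := Part.dom_iff_mem.2 ⟨_, hp'⟩
  -- the weight of `p'`
  have hw1 : ∑ p ∈ stg E s', wt T p + wt T p' ≤ Zfun U T := by
    rw [Zfun_eq, add_comm, ← Finset.sum_insert hnot]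
    refine sum_le_Z (wt T) (fun p => (wt_pos _ _).le) hsT _ ?_
    intro q hq
    simp only [Finset.coe_insert, Set.mem_insert_iff] at hq
    rcases hq with rfl | hq
    · exact hdom
    · exact hE.sub s' hq
  have hw2 : Zfun U T < ∑ p ∈ stg E s', wt t p := by
    have h1 := (Sfun_stg hE s' (j + 1) (2 ^ N) M' (Nat.succ_pos _) (by positivity)).1
    rw [← ht] at h1
    have h2 := (abs_le.1 (hgz M')).2
    have h3 : ((g M' + 2 : ℕ) : ℝ) < (Sfun (E s') (j + 1) (2 ^ N) M' : ℝ) := by exact_mod_cast hPu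
    push_cast at h3
    have h4 : (2:ℝ) ^ M' * Zfun U T < 2 ^ M' * ∑ p ∈ stg E s', wt t p := by linarith
    exact lt_of_mul_lt_mul_left h4 (by positivity)
  have hw3 : ∑ p ∈ stg E s', wt t p - ∑ p ∈ stg E s', wt T p ≤ K * (t - T) := by
    rw [← Finset.sum_sub_distrib]
    calc _ ≤ ∑ p ∈ stg E s', K * (t - T) * wt 1 p := Finset.sum_le_sum fun p _ => hK t htT htt0 p
      _ = K * (t - T) * ∑ p ∈ stg E s', wt 1 p := by rw [Finset.mul_sum]
      _ ≤ K * (t - T) * 1 := by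
        apply mul_le_mul_of_nonneg_left (hA _ (hE.sub s'))
        have : 0 ≤ t - T := by linarith
        positivity
      _ = _ := by ring
  have hw4 : wt T p' ≤ (2:ℝ) ^ ((k : ℝ) - N) := by
    have h1 : wt T p' ≤ K * (1 / 2) ^ N := by
      have : K * (t - T) ≤ K * (1 / 2) ^ N := mul_le_mul_of_nonneg_left htT' hK0.le
      linarith
    refine h1.trans ?_
    rw [Real.rpow_sub two_pos, Real.rpow_natCast, Real.rpow_natCast, one_div, inv_pow, ← div_eq_mul_inv]
    gcongr
  have hw5 : -(p'.length : ℝ) / T ≤ (k : ℝ) - N := by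
    unfold wt at hw4
    exact (Real.rpow_le_rpow_left_iff one_lt_two).1 hw4
  rw [div_le_iff₀ hT0] at hw5
  have h6 : (p'.length : ℝ) ≤ complexity U (firstBits T N) + d := by
    rw [← hpl]; exact_mod_cast hp'l
  have h7 : (k : ℝ) * T ≤ k := by
    have : (0:ℝ) ≤ k := by positivity
    nlinarith
  have : (0:ℝ) ≤ n0 := by positivity
  push_cast
  nlinarith

theorem primrec_bitsOf : Primrec₂ bitsOf := by
  refine Primrec.list_map (Primrec.list_range.comp Primrec.fst) ?_
  have hv : Primrec (fun x : (ℕ × ℕ) × ℕ => x.1.2) := Primrec.snd.comp Primrec.fst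
  have hn : Primrec (fun x : (ℕ × ℕ) × ℕ => x.1.1 - 1 - x.2) :=
    Primrec.nat_sub.comp (Primrec.nat_sub.comp (Primrec.fst.comp Primrec.fst) (Primrec.const 1)) Primrec.snd
  exact Primrec.eq.decide.comp
    (Primrec.nat_mod.comp (Primrec.nat_div.comp hv (primrec_pow.comp (Primrec.const 2) hn)) (Primrec.const 2))
    (Primrec.const 1)

/-- Number of leading `true`s. -/
def lead (p : List Bool) : ℕ := p.findIdx (fun b => !b)

/-- Parse a program `1^q 0 w` with `|w| = a (q + 1)` into `(q + 1, bval w)`. -/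
def prs (a : ℕ) (p : List Bool) : Option (ℕ × ℕ) :=
  if p.length = (lead p + 1) * (a + 1) then some (lead p + 1, bval p % 2 ^ (a * (lead p + 1))) else none

theorem primrec_lead : Primrec lead :=
  Primrec.list_findIdx Primrec.id (Primrec.not.comp Primrec.snd)

theorem primrec_prs (a : ℕ) : Primrec (prs a) := by
  have hl : Primrec fun p : List Bool => lead p + 1 := Primrec.succ.comp primrec_lead
  refine Primrec.ite ?_ ?_ (Primrec.const _)
  · exact Primrec.eq.comp Primrec.list_length (Primrec.nat_mul.comp hl (Primrec.const _))
  · refine Primrec.option_some.comp (hl.pair ?_)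
    exact Primrec.nat_mod.comp primrec_bval (primrec_pow.comp (Primrec.const 2) (Primrec.nat_mul.comp (Primrec.const _) hl))

theorem prs_prefix (a : ℕ) (p q : List Bool) (hp : (prs a p).isSome) (hq : (prs a q).isSome) (h : p <+: q) : p = q := by
  unfold prs at hp hq
  split_ifs at hp with h1 <;> [skip; simp at hp]
  split_ifs at hq with h2 <;> [skip; simp at hq]
  have h3 : lead p < p.length := by
    rw [h1]
    nlinarith [Nat.zero_le a, Nat.zero_le (lead p)]
  have h4 : lead q = lead p := by
    obtain ⟨w, rfl⟩ := h
    unfold lead at h3 ⊢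
    rw [List.findIdx_append, if_pos h3]
  exact h.eq_of_length (by rw [h1, h2, h4])

theorem prs_prog (a q A : ℕ) (hA : A < 2 ^ (a * (q + 1))) :
    prs a (List.replicate q true ++ false :: bitsOf (a * (q + 1)) A) = some (q + 1, A) := by
  have h1 : lead (List.replicate q true ++ false :: bitsOf (a * (q + 1)) A) = q := by
    generalize bitsOf (a * (q + 1)) A = w
    clear hA
    induction q with
    | zero => simp [lead, List.findIdx_cons]
    | succ q ih =>
      unfold lead at ih ⊢
      rw [List.replicate_succ, List.cons_append, List.findIdx_cons, ih]
      rfl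
  unfold prs
  rw [h1, if_pos]
  · have h2 : List.replicate q true ++ false :: bitsOf (a * (q + 1)) A = (List.replicate q true ++ [false]) ++ bitsOf (a * (q + 1)) A := by
      simp
    rw [h2, bval_append, length_bitsOf, bval_bitsOf, Nat.mul_add_mod_self_right, Nat.mod_mod, Nat.mod_eq_of_lt hA]
  · simp [length_bitsOf]
    ring

section machine
variable (E : ℕ → List (List Bool × List Bool)) (g : ℕ → ℕ) (K a r e : ℕ)

/-- First search predicate. -/
def P1 (x : ℕ × ℕ) (u : ℕ) : Bool :=
  decide (x.2 * 2 ^ u.unpair.2 < Sfun (E u.unpair.1) 1 1 (a * x.1 + u.unpair.2))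

/-- Second search predicate. -/
def P2 (x : ℕ × ℕ) (j : ℕ) : Bool :=
  decide (g (K * x.1 + x.2) ≤ Sfun (E x.2) (j + 1) (2 ^ (K * x.1)) (K * x.1 + x.2) + (2 * 2 ^ x.2 + 2))

/-- The decompressor. -/
def mach (p : List Bool) : Part (List Bool) :=
  (prs a p : Part (ℕ × ℕ)).bind fun x => (srch (P1 E a x)).bind fun u =>
    (srch (P2 E g K (x.1, u.unpair.1))).map fun j => bitsOf (K * x.1 - r) ((j + e) / 2 ^ r)

theorem computable_P1 (hE : Primrec E) : Computable₂ (P1 E a) := by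
  have hu1 : Computable (fun x : (ℕ × ℕ) × ℕ => x.2.unpair.1) := Computable.fst.comp (Computable.unpair.comp Computable.snd)
  have hu2 : Computable (fun x : (ℕ × ℕ) × ℕ => x.2.unpair.2) := Computable.snd.comp (Computable.unpair.comp Computable.snd)
  have hk : Computable (fun x : (ℕ × ℕ) × ℕ => x.1.1) := Computable.fst.comp Computable.fst
  have hA : Computable (fun x : (ℕ × ℕ) × ℕ => x.1.2) := Computable.snd.comp Computable.fst
  refine (Primrec.nat_lt.decide.to_comp).comp (Primrec.nat_mul.to_comp.comp hA (computable_two_pow hu2)) ?_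
  exact computable_S (hE.to_comp.comp hu1) (Computable.const 1) (Computable.const 1)
    (Primrec.nat_add.to_comp.comp (Primrec.nat_mul.to_comp.comp (Computable.const a) hk) hu2)

theorem computable_P2 (hE : Primrec E) (hg : Computable g) : Computable₂ (P2 E g K) := by
  have hk : Computable (fun x : (ℕ × ℕ) × ℕ => K * x.1.1) :=
    Primrec.nat_mul.to_comp.comp (Computable.const K) (Computable.fst.comp Computable.fst)
  have hs : Computable (fun x : (ℕ × ℕ) × ℕ => x.1.2) := Computable.snd.comp Computable.fst
  have hN : Computable (fun x : (ℕ × ℕ) × ℕ => K * x.1.1 + x.1.2) := Primrec.nat_add.to_comp.comp hk hs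
  refine (Primrec.nat_le.decide.to_comp).comp (hg.comp hN) (Primrec.nat_add.to_comp.comp ?_ ?_)
  · exact computable_S (hE.to_comp.comp hs) (Computable.succ.comp Computable.snd) (computable_two_pow hk) hN
  · exact Primrec.nat_add.to_comp.comp (Primrec.nat_mul.to_comp.comp (Computable.const 2) (computable_two_pow hs)) (Computable.const 2)

theorem partrec_mach (hE : Primrec E) (hg : Computable g) : Partrec (mach E g K a r e) := by
  refine Partrec.bind (Computable.ofOption (primrec_prs a).to_comp) ?_
  refine Partrec.bind ((srch_partrec (computable_P1 E a hE)).comp Computable.snd) ?_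
  refine Partrec.map ((srch_partrec (computable_P2 E g K hE hg)).comp ?_) ?_
  · exact (Computable.fst.comp (Computable.snd.comp Computable.fst)).pair
      (Computable.fst.comp (Computable.unpair.comp Computable.snd))
  · refine (primrec_bitsOf.to_comp).comp ?_ ?_
    · refine Primrec.nat_sub.to_comp.comp (Primrec.nat_mul.to_comp.comp (Computable.const K) ?_) (Computable.const r)
      exact Computable.fst.comp (Computable.snd.comp (Computable.fst.comp Computable.fst))
    · exact Primrec.nat_div.to_comp.comp (Primrec.nat_add.to_comp.comp Computable.snd (Computable.const e)) (Computable.const _)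

theorem prefix_mach : PrefixFree (mach E g K a r e) := by
  intro p q hp hq h
  refine prs_prefix a p q ?_ ?_ h
  · simpa using hp.1
  · simpa using hq.1
end machine

theorem mach_correct (U : List Bool →. List Bool) (hU : OptimalMachine U) (T : ℝ) (hT0 : 0 < T) (hT1 : T < 1)
    (g : ℕ → ℕ) (hgz : ∀ n, |Zfun U T * 2 ^ n - g n| ≤ 2)
    (E : ℕ → List (List Bool × List Bool)) (hE : Enum U E) (K a : ℕ) (ha : T * K ≤ a) :
    ∃ Ce : ℕ, ∀ k r : ℕ, 1 ≤ k → r ≤ K * k → ∃ e ≤ Ce, ∃ p, p.length = k * (a + 1) ∧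
      firstBits T (K * k - r) ∈ mach E g K a r e p := by
  have hA := fun F hF => kraft_dom hU.2.1 F hF
  obtain ⟨p0, hp0, hp0l⟩ := exists_prog_pos U hU
  have hw0 := wt_pos T p0
  refine ⟨⌈24 / wt T p0⌉₊ + 1, fun k r hk hr => ?_⟩
  obtain ⟨q, rfl⟩ : ∃ q, k = q + 1 := ⟨k - 1, by omega⟩
  have hs1 := summ_wt hA one_pos le_rfl
  have hsT := summ_wt hA hT0 hT1.le
  set Om : ℝ := ∑' p : domS U, wt 1 p with hOm
  have hOm0 : 0 < Om := by
    have := sum_le_Z (wt 1) (fun p => (wt_pos _ _).le) hs1 {p0} (by simpa using (show p0 ∈ domS U from hp0))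
    rw [Finset.sum_singleton] at this
    exact (wt_pos _ _).trans_le this
  have hOm1 : Om ≤ 1 := by
    refine hs1.tsum_le_of_sum_le fun G => ?_
    exact sum_map_le (wt 1) G 1 hA
  set m := a * (q + 1) with hm
  set n := K * (q + 1) with hn
  set A := ⌈2 ^ m * Om⌉₊ - 1 with hAdef
  have hcp : 0 < ⌈2 ^ m * Om⌉₊ := Nat.ceil_pos.2 (by positivity)
  have hA1 : (A : ℝ) + 1 = ⌈2 ^ m * Om⌉₊ := by
    have : A + 1 = ⌈2 ^ m * Om⌉₊ := by omega
    exact_mod_cast this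
  have hA2 : (A : ℝ) < 2 ^ m * Om := by
    have := Nat.ceil_lt_add_one (a := 2 ^ m * Om) (by positivity)
    linarith
  have hA3 : 2 ^ m * Om ≤ A + 1 := by rw [hA1]; exact Nat.le_ceil _
  have h2m : (0:ℝ) < 2 ^ m := by positivity
  have hA4 : A < 2 ^ m := by
    have : (A : ℝ) < 2 ^ m := by nlinarith
    exact_mod_cast this
  have hprs := prs_prog a q A hA4
  -- first search
  have h11 : ((1 : ℕ) : ℝ) / ((1 : ℕ) : ℝ) = 1 := by norm_num
  obtain ⟨s0, hs0⟩ := Z_approx (wt 1) (fun p => (wt_pos _ _).le) hs1 (stg E) hE.exh (A / 2 ^ m)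
    (by rw [div_lt_iff₀ h2m, mul_comm]; exact hA2)
  obtain ⟨M, hM⟩ := pow_unbounded_of_one_lt (s0 / (2 ^ m * ∑ p ∈ stg E s0, wt 1 p - A)) (one_lt_two)
  have hpos : 0 < 2 ^ m * ∑ p ∈ stg E s0, wt 1 p - A := by
    rw [div_lt_iff₀ h2m, mul_comm] at hs0
    linarith
  have hP1 : P1 E a (q + 1, A) (Nat.pair s0 M) = true := by
    simp only [P1, Nat.unpair_pair, decide_eq_true_eq]
    rw [← hm]
    have h1 := (Sfun_stg hE s0 1 1 (m + M) one_pos one_pos).2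
    rw [h11, pow_add] at h1
    rw [div_lt_iff₀ hpos] at hM
    have h4 : ((A * 2 ^ M : ℕ) : ℝ) < (Sfun (E s0) 1 1 (m + M) : ℝ) := by
      push_cast
      nlinarith
    exact_mod_cast h4
  obtain ⟨u, hu, _⟩ := srch_ex hP1
  have hPu := srch_spec hu
  simp only [P1, decide_eq_true_eq] at hPu
  rw [← hm] at hPu
  set s := u.unpair.1 with hs
  have htail : Om - ∑ p ∈ stg E s, wt 1 p ≤ (1 / 2 : ℝ) ^ m := by
    have h1 := (Sfun_stg hE s 1 1 (m + u.unpair.2) one_pos one_pos).1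
    rw [h11, pow_add] at h1
    have h3 : ((A * 2 ^ u.unpair.2 : ℕ) : ℝ) < (Sfun (E s) 1 1 (m + u.unpair.2) : ℝ) := by exact_mod_cast hPu
    push_cast at h3
    have h5 : (A : ℝ) < 2 ^ m * ∑ p ∈ stg E s, wt 1 p := by
      have : (2:ℝ) ^ u.unpair.2 * A < 2 ^ u.unpair.2 * (2 ^ m * ∑ p ∈ stg E s, wt 1 p) := by linarith
      exact lt_of_mul_lt_mul_left this (by positivity)
    rw [one_div, inv_pow, ← one_div, le_div_iff₀ h2m]
    linarith
  have htb := tail_bound hA hT0 hT1 (stg E s) (hE.sub s) m htail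
  rw [← Zfun_eq] at htb
  have h2n : (0:ℝ) < 2 ^ n := by positivity
  have h2s : (0:ℝ) < 2 ^ s := by positivity
  have hexp : (2 : ℝ) ^ (-(m : ℝ) / T) ≤ 1 / 2 ^ n := by
    rw [one_div, ← Real.rpow_natCast, ← Real.rpow_neg two_pos.le]
    apply Real.rpow_le_rpow_of_exponent_le one_le_two
    rw [neg_div, neg_le_neg_iff, le_div_iff₀ hT0, hn, hm]
    push_cast
    have : (0:ℝ) ≤ (q:ℝ) + 1 := by positivity
    nlinarith
  -- second search
  set j0 := ⌊T * 2 ^ n⌋₊ with hj0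
  have hj1 : (j0 : ℝ) ≤ T * 2 ^ n := Nat.floor_le (by positivity)
  have hj2 : T * 2 ^ n < j0 + 1 := Nat.lt_floor_add_one _
  have hP2 : P2 E g K (q + 1, s) j0 = true := by
    simp only [P2, decide_eq_true_eq]
    rw [← hn]
    have h1 := (Sfun_stg hE s (j0 + 1) (2 ^ n) (n + s) (Nat.succ_pos _) (by positivity)).2
    have hx : T ≤ ((j0 + 1 : ℕ) : ℝ) / ((2 ^ n : ℕ) : ℝ) := by
      rw [le_div_iff₀ (by positivity)]
      push_cast
      exact hj2.le
    have h2 : ∑ p ∈ stg E s, wt T p ≤ ∑ p ∈ stg E s, wt (((j0 + 1 : ℕ) : ℝ) / ((2 ^ n : ℕ) : ℝ)) p :=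
      Finset.sum_le_sum fun p _ => wt_mono hT0 hx p
    have h3 := (abs_le.1 (hgz (n + s))).1
    have h4 : (2:ℝ) ^ (n + s) * Zfun U T ≤
        2 ^ (n + s) * (∑ p ∈ stg E s, wt (((j0 + 1 : ℕ) : ℝ) / ((2 ^ n : ℕ) : ℝ)) p + 1 / 2 ^ n) := by
      apply mul_le_mul_of_nonneg_left _ (by positivity)
      linarith
    have h5 : (2:ℝ) ^ (n + s) * (1 / 2 ^ n) = 2 ^ s := by
      rw [pow_add]; field_simp
    have h6 : (s : ℝ) ≤ 2 ^ s := by exact_mod_cast (Nat.lt_two_pow_self (n := s)).le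
    rw [mul_add, h5] at h4
    have h7 : ((g (n + s) : ℕ) : ℝ) ≤ (Sfun (E s) (j0 + 1) (2 ^ n) (n + s) + (2 * 2 ^ s + 2) : ℕ) := by
      push_cast at h1 h4 ⊢
      linarith
    exact_mod_cast h7
  obtain ⟨j, hj, hjle⟩ := srch_ex hP2
  have hPj := srch_spec hj
  simp only [P2, decide_eq_true_eq] at hPj
  rw [← hn] at hPj
  have hclose : T * 2 ^ n ≤ j + 1 + 24 / wt T p0 := by
    set x : ℝ := ((j + 1 : ℕ) : ℝ) / ((2 ^ n : ℕ) : ℝ) with hx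
    have hx0 : 0 < x := by positivity
    have hxe : x * 2 ^ n = j + 1 := by
      rw [hx]; push_cast; field_simp
    have h24 : 0 < 24 / wt T p0 := by positivity
    by_cases hxT : x < T
    · have h1 := (Sfun_stg hE s (j + 1) (2 ^ n) (n + s) (Nat.succ_pos _) (by positivity)).1
      rw [← hx] at h1
      have h2 := (abs_le.1 (hgz (n + s))).2
      have h3 : ((g (n + s) : ℕ) : ℝ) ≤ (Sfun (E s) (j + 1) (2 ^ n) (n + s) + (2 * 2 ^ s + 2) : ℕ) := by
        exact_mod_cast hPj
      push_cast at h3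
      have h4 : (1 : ℝ) ≤ 2 ^ s := one_le_pow₀ one_le_two
      have h5 : (2:ℝ) ^ n * (Zfun U T - ∑ p ∈ stg E s, wt x p) ≤ 6 := by
        have : (2:ℝ) ^ s * ((2:ℝ) ^ n * (Zfun U T - ∑ p ∈ stg E s, wt x p)) ≤ 2 ^ s * 6 := by
          rw [pow_add] at h1 h2
          linarith
        exact le_of_mul_le_mul_left this h2s
      have hsx := summ_wt hA hx0 (hxT.le.trans hT1.le)
      have h6 := sum_le_Z (wt x) (fun p => (wt_pos _ _).le) hsx (stg E s) (hE.sub s)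
      have h7 : wt T p0 - wt x p0 ≤ Zfun U T - ∑' p : domS U, wt x p := by
        rw [Zfun_eq, ← hsT.tsum_sub hsx]
        exact (hsT.sub hsx).le_tsum (⟨p0, hp0⟩ : domS U) fun p _ => sub_nonneg.2 (wt_mono hx0 hxT.le p)
      have h8 := wt_lower hT0 hT1 p0 hp0l hx0 hxT.le
      have h9 : (2:ℝ) ^ n * (wt T p0 * (T - x) / 4) ≤ 6 := by
        refine le_trans (mul_le_mul_of_nonneg_left ?_ h2n.le) h5
        linarith
      have h10 : T * 2 ^ n - (j + 1) ≤ 24 / wt T p0 := by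
        rw [le_div_iff₀ hw0, ← hxe]
        nlinarith
      linarith
    · push Not at hxT
      have : T * 2 ^ n ≤ x * 2 ^ n := mul_le_mul_of_nonneg_right hxT h2n.le
      linarith
  refine ⟨j0 - j, ?_, List.replicate q true ++ false :: bitsOf (a * (q + 1)) A, ?_, ?_⟩
  · have : (j0 : ℝ) ≤ j + (⌈24 / wt T p0⌉₊ + 1) := by
      have := Nat.le_ceil (24 / wt T p0)
      linarith
    have : j0 ≤ j + (⌈24 / wt T p0⌉₊ + 1) := by exact_mod_cast this
    omega
  · simp [length_bitsOf]
    ring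
  · simp only [mach, Part.mem_bind_iff, Part.mem_map_iff]
    refine ⟨(q + 1, A), ?_, u, hu, j, hj, ?_⟩
    · rw [hprs]; simp
    · rw [bits_floor hT0 hT1, ← hn]
      congr 1
      have : j + (j0 - j) = j0 := by omega
      rw [this, hj0, ← Nat.floor_div_natCast]
      congr 1
      push_cast
      rw [div_eq_iff (by positivity), mul_assoc, ← pow_add]
      congr 2
      omega

theorem upper_bound (U : List Bool →. List Bool) (hU : OptimalMachine U) (T : ℝ) (hT0 : 0 < T) (hT1 : T < 1)
    (g : ℕ → ℕ) (hg : Computable g) (hgz : ∀ n, |Zfun U T * 2 ^ n - g n| ≤ 2) (K : ℕ) (hK : 1 ≤ K) :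
    ∃ D : ℕ, ∀ n : ℕ, (complexity U (firstBits T n) : ℝ) ≤ ((n : ℝ) / K + 1) * (T * K + 2) + D := by
  obtain ⟨E, hE1, hE2, hE3, hE4, hE5⟩ := stages U hU.1
  have hE : Enum U E := ⟨hE1, hE2, hE3, hE4, hE5⟩
  set a := ⌈T * K⌉₊ with ha
  obtain ⟨Ce, hCe⟩ := mach_correct U hU T hT0 hT1 g hgz E hE K a (Nat.le_ceil _)
  have hd : ∀ r e : ℕ, ∃ d : ℕ, ∀ p s, s ∈ mach E g K a r e p → ∃ p', s ∈ U p' ∧ p'.length ≤ p.length + d :=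
    fun r e => hU.2.2 _ (partrec_mach E g K a r e hE1 hg) (prefix_mach E g K a r e)
  choose d hd using hd
  refine ⟨∑ r ∈ Finset.range (K + 1), ∑ e ∈ Finset.range (Ce + 1), d r e, fun n => ?_⟩
  have hdm := Nat.div_add_mod n K
  have hml := Nat.mod_lt n hK
  have hr : K * (n / K + 1) - (K - n % K) = n := by
    rw [mul_add, mul_one]; omega
  obtain ⟨e, he, p, hpl, hp⟩ := hCe (n / K + 1) (K - n % K) (Nat.succ_le_succ (Nat.zero_le _)) (by rw [mul_add, mul_one]; omega)
  rw [hr] at hp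
  obtain ⟨p', hp', hl⟩ := hd _ _ _ _ hp
  have h1 := complexity_le U _ _ hp'
  have h2 : d (K - n % K) e ≤ ∑ r ∈ Finset.range (K + 1), ∑ e ∈ Finset.range (Ce + 1), d r e := by
    refine le_trans ?_ (Finset.single_le_sum (f := fun r => ∑ e ∈ Finset.range (Ce + 1), d r e)
      (fun _ _ => Nat.zero_le _) (Finset.mem_range.2 (by omega : K - n % K < K + 1)))
    exact Finset.single_le_sum (f := fun e => d (K - n % K) e)
      (fun _ _ => Nat.zero_le _) (Finset.mem_range.2 (by omega : e < Ce + 1))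
  have h3 : complexity U (firstBits T n) ≤ (n / K + 1) * (a + 1) +
      ∑ r ∈ Finset.range (K + 1), ∑ e ∈ Finset.range (Ce + 1), d r e := by omega
  have h4 : (complexity U (firstBits T n) : ℝ) ≤ (((n / K : ℕ) : ℝ) + 1) * (a + 1) +
      (∑ r ∈ Finset.range (K + 1), ∑ e ∈ Finset.range (Ce + 1), d r e : ℕ) := by exact_mod_cast h3
  refine h4.trans ?_
  have h5 : ((n / K : ℕ) : ℝ) ≤ (n : ℝ) / K := Nat.cast_div_le
  have h6 : (a : ℝ) < T * K + 1 := Nat.ceil_lt_add_one (by positivity)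
  gcongr ?_ * ?_ + _
  · linarith
  · linarith

theorem fixed_point_by_partition_function (U : List Bool →. List Bool)
    (hU : OptimalMachine U) (T : ℝ) (hT0 : 0 < T) (hT1 : T < 1)
    (hZ : ComputableReal (Zfun U T)) :
    WeaklyChaitinTRandom U T T ∧ TCompressible U T T ∧
      Filter.Tendsto (fun n : ℕ => (complexity U (firstBits T n) : ℝ) / (n : ℝ))
        Filter.atTop (nhds T) := by
  have hz0 : 0 ≤ Zfun U T := tsum_nonneg fun p => by positivity
  obtain ⟨g, hg, hgz⟩ := computable_dyadic hZ hz0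
  have hlow := lower_bound U hU T hT0 hT1 g hg hgz
  have hup := upper_bound U hU T hT0 hT1 g hg hgz
  have hinv : ∀ c : ℝ, Tendsto (fun n : ℕ => c / (n : ℝ)) atTop (nhds 0) := fun c =>
    tendsto_const_div_atTop_nhds_zero_nat c
  have hT : Tendsto (fun n : ℕ => (complexity U (firstBits T n) : ℝ) / (n : ℝ)) atTop (nhds T) := by
    refine tendsto_order.2 ⟨fun b hb => ?_, fun b hb => ?_⟩
    · obtain ⟨c, hc⟩ := hlow
      filter_upwards [(hinv c).eventually (gt_mem_nhds (sub_pos.2 hb)), eventually_gt_atTop 0] with n h1 h2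
      have h3 := hc ⟨n, h2⟩
      have h4 : (0:ℝ) < n := by exact_mod_cast h2
      simp only [PNat.mk_coe] at h3
      rw [div_lt_iff₀ h4] at h1
      rw [lt_div_iff₀ h4]
      linarith
    · obtain ⟨K, hK⟩ := exists_nat_gt (4 / (b - T))
      have hbT : 0 < b - T := sub_pos.2 hb
      have hK0 : (0:ℝ) < K := lt_trans (by positivity) hK
      have hK1 : 1 ≤ K := by exact_mod_cast hK0
      obtain ⟨D, hD⟩ := hup K hK1
      filter_upwards [(hinv (T * K + 2 + D)).eventually (gt_mem_nhds (half_pos hbT)), eventually_gt_atTop 0]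
        with n h1 h2
      have h4 : (0:ℝ) < n := by exact_mod_cast h2
      have h3 := hD n
      rw [div_lt_iff₀ h4] at h1
      rw [div_lt_iff₀ h4]
      rw [div_lt_iff₀ hbT] at hK
      have h5 : ((n : ℝ) / K + 1) * (T * K + 2) = T * n + n * (2 / K) + (T * K + 2) := by
        field_simp
      have h6 : 2 / (K : ℝ) < (b - T) / 2 := by
        rw [div_lt_iff₀ hK0]; linarith
      have h7 : (n : ℝ) * (2 / K) < n * ((b - T) / 2) := mul_lt_mul_of_pos_left h6 h4
      linarith
  exact ⟨hlow, hT.limsup_eq.le, hT⟩
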